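/- arXiv:0902.4486 — 4 statements merged into one kernel-verified Lean document; each statement's English description precedes it below -/
import Mathlib

section
/- Let n ≥ 2 be an integer and let a_1, …, a_n be real numbers such that a_1 + ⋯ + a_n = 0. Then −((n−2)/√(n(n−1)))·(∑_{i=1}^n a_i²)^{3/2} ≤ ∑_{i=1}^n a_i³ ≤ ((n−2)/√(n(n−1)))·(∑_{i=1}^n a_i²)^{3/2}. -/
/-!
Put `S = ∑ aᵢ²` and choose `c ≥ 0` with `S = n (n - 1) c²`. Cauchy–Schwarz applied to the `n - 1`
numbers other than `aᵢ`, whose sum is `-aᵢ`, gives `|aᵢ| ≤ (n - 1) c`. Hence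
`∑ ((n - 1) c - aᵢ) (aᵢ + c)² ≥ 0`, and expanding the product with `∑ aᵢ = 0` gives
`∑ aᵢ³ ≤ (n - 2) c S`. The product vanishes at both values of the extremal configuration, in which
one number is `(n - 1) c` and the others are all `-c`; the factor at `-c` is squared to keep the
sign. The lower bound is the upper bound for `-a`.
-/

open Finset

section PowerSums

variable {ι R : Type*} [CommRing R] {s : Finset ι} {f : ι → R}

lemma sum_sub_mul_add_sq_of_sum_eq_zero (hf : ∑ i ∈ s, f i = 0) (b c : R) :
    ∑ i ∈ s, (b - f i) * (f i + c) ^ 2 =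
      (b - 2 * c) * ∑ i ∈ s, f i ^ 2 - ∑ i ∈ s, f i ^ 3 + #s * (b * c ^ 2) := by
  calc
    _ = ∑ i ∈ s, ((b - 2 * c) * f i ^ 2 - f i ^ 3 + (2 * b * c - c ^ 2) * f i + b * c ^ 2) :=
      sum_congr rfl fun i _ ↦ by ring
    _ = _ := by
      simp only [sum_add_distrib, sum_sub_distrib, ← mul_sum, hf, sum_const, nsmul_eq_mul]
      ring

variable [LinearOrder R] [IsStrictOrderedRing R] {c : R} {i : ι}

lemma card_mul_sq_le_of_sum_eq_zero (hf : ∑ j ∈ s, f j = 0) (hi : i ∈ s) :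
    #s * f i ^ 2 ≤ (#s - 1) * ∑ j ∈ s, f j ^ 2 := by
  classical
  have sum_others : ∑ j ∈ s.erase i, f j = -f i := by
    rw [sum_erase_eq_sub hi, hf, zero_sub]
  have cauchy_schwarz : f i ^ 2 ≤ (#s - 1) * (∑ j ∈ s, f j ^ 2 - f i ^ 2) := by
    simpa only [sum_others, neg_sq, cast_card_erase_of_mem hi, sum_erase_eq_sub hi] using
      sq_sum_le_card_mul_sum_sq (s := s.erase i) (f := f)
  linarith

lemma abs_le_card_sub_one_mul_of_sum_eq_zero (hf : ∑ j ∈ s, f j = 0) (hc : 0 ≤ c)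
    (hfc : ∑ j ∈ s, f j ^ 2 = #s * (#s - 1) * c ^ 2) (hi : i ∈ s) :
    |f i| ≤ (#s - 1) * c := by
  have one_le_card : (1 : R) ≤ #s := Nat.one_le_cast.2 (card_pos.2 ⟨i, hi⟩)
  have scaled : (#s : R) * f i ^ 2 ≤ #s * ((#s - 1) * c) ^ 2 :=
    calc
      _ ≤ (#s - 1) * ∑ j ∈ s, f j ^ 2 := card_mul_sq_le_of_sum_eq_zero hf hi
      _ = _ := by rw [hfc]; ring
  exact abs_le_of_sq_le_sq (le_of_mul_le_mul_left scaled (zero_lt_one.trans_le one_le_card))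
    (mul_nonneg (sub_nonneg.2 one_le_card) hc)

lemma sum_pow_three_le_of_sum_eq_zero (hf : ∑ j ∈ s, f j = 0) (hc : 0 ≤ c)
    (hfc : ∑ j ∈ s, f j ^ 2 = #s * (#s - 1) * c ^ 2) :
    ∑ j ∈ s, f j ^ 3 ≤ (#s - 2) * c * ∑ j ∈ s, f j ^ 2 := by
  have product_sum_nonneg : 0 ≤ ∑ j ∈ s, ((#s - 1) * c - f j) * (f j + c) ^ 2 :=
    sum_nonneg fun j hj ↦ mul_nonneg
      (sub_nonneg.2 (le_of_abs_le (abs_le_card_sub_one_mul_of_sum_eq_zero hf hc hfc hj)))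
      (sq_nonneg _)
  have const_term : #s * ((#s - 1) * c * c ^ 2) = c * ∑ j ∈ s, f j ^ 2 := by
    rw [hfc]; ring
  rw [sum_sub_mul_add_sq_of_sum_eq_zero hf, const_term] at product_sum_nonneg
  linarith

lemma abs_sum_pow_three_le_of_sum_eq_zero (hf : ∑ j ∈ s, f j = 0) (hc : 0 ≤ c)
    (hfc : ∑ j ∈ s, f j ^ 2 = #s * (#s - 1) * c ^ 2) :
    |∑ j ∈ s, f j ^ 3| ≤ (#s - 2) * c * ∑ j ∈ s, f j ^ 2 := by
  refine abs_le'.2 ⟨sum_pow_three_le_of_sum_eq_zero hf hc hfc, ?_⟩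
  have upper_neg := sum_pow_three_le_of_sum_eq_zero (s := s) (f := fun j ↦ -f j)
    (by simp [hf]) hc (by simpa using hfc)
  simpa only [Odd.neg_pow (by decide : Odd 3), neg_sq, sum_neg_distrib] using upper_neg

end PowerSums

theorem okumura_lemma_general {ι : Type*} {s : Finset ι} (hs : 2 ≤ #s) {f : ι → ℝ}
    (hf : ∑ i ∈ s, f i = 0) :
    |∑ i ∈ s, f i ^ 3| ≤
      ((#s : ℝ) - 2) / √(#s * (#s - 1)) * (∑ i ∈ s, f i ^ 2) ^ ((3 : ℝ) / 2) := by
  have hs' : (2 : ℝ) ≤ #s := Nat.ofNat_le_cast.2 hs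
  have card_mul_pos : (0 : ℝ) < #s * (#s - 1) := mul_pos (by linarith) (by linarith)
  have sum_sq_nonneg : 0 ≤ ∑ i ∈ s, f i ^ 2 := sum_nonneg fun i _ ↦ sq_nonneg _
  set r := √(#s * (#s - 1) : ℝ)
  set S := ∑ i ∈ s, f i ^ 2
  have sum_sq_eq : S = #s * (#s - 1) * (√S / r) ^ 2 := by
    rw [div_pow, Real.sq_sqrt sum_sq_nonneg, Real.sq_sqrt card_mul_pos.le,
      mul_div_cancel₀ _ card_mul_pos.ne']
  calc
    _ ≤ (#s - 2) * (√S / r) * S :=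
      abs_sum_pow_three_le_of_sum_eq_zero hf
        (div_nonneg (Real.sqrt_nonneg _) (Real.sqrt_nonneg _)) sum_sq_eq
    _ = (#s - 2) / r * √S ^ 3 := by
      rw [pow_succ', Real.sq_sqrt sum_sq_nonneg]; ring
    _ = (#s - 2) / r * S ^ ((3 : ℝ) / 2) := by
      rw [Real.rpow_div_two_eq_sqrt _ sum_sq_nonneg, Real.rpow_ofNat]

/-- Okumura's lemma: if `a₁ + ⋯ + aₙ = 0` then
`-((n-2)/√(n(n-1))) (∑ aᵢ²)^{3/2} ≤ ∑ aᵢ³ ≤ ((n-2)/√(n(n-1))) (∑ aᵢ²)^{3/2}`. -/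
theorem okumura_lemma (n : ℕ) (hn : 2 ≤ n) (a : Fin n → ℝ)
    (hsum : ∑ i, a i = 0) :
    -(((n : ℝ) - 2) / Real.sqrt ((n : ℝ) * ((n : ℝ) - 1))) *
        (∑ i, (a i) ^ 2) ^ ((3 : ℝ) / 2) ≤ ∑ i, (a i) ^ 3 ∧
    ∑ i, (a i) ^ 3 ≤ (((n : ℝ) - 2) / Real.sqrt ((n : ℝ) * ((n : ℝ) - 1))) *
        (∑ i, (a i) ^ 2) ^ ((3 : ℝ) / 2) := by
  rw [neg_mul, ← abs_le]
  simpa only [card_fin] using okumura_lemma_general ((card_fin n).symm ▸ hn) hsum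
end

section
/- Let n ≥ 2 be an integer and let a_1, …, a_n be real numbers with a_1 + ⋯ + a_n = 0. Then ∑_{i=1}^n a_i³ = ((n−2)/√(n(n−1)))·(∑_{i=1}^n a_i²)^{3/2} holds if and only if n−1 of the a_i are nonpositive and mutually equal; and ∑_{i=1}^n a_i³ = −((n−2)/√(n(n−1)))·(∑_{i=1}^n a_i²)^{3/2} holds if and only if n−1 of the a_i are nonnegative and mutually equal. -/
/-!
Choose `k ≥ 0` with `∑ aᵢ² = n (n - 1) k²`; the upper bound is then `(n - 2) n (n - 1) k³`.
Since `∑ aᵢ = 0`, the gap in the inequality is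
`(n - 2) n (n - 1) k³ - ∑ aᵢ³ = ∑ (aᵢ + k)² ((n - 1) k - aᵢ)`.
By Samuelson's inequality (Cauchy–Schwarz applied to the coordinates other than `aᵢ`),
`aᵢ ≤ (n - 1) k`, so every summand is nonnegative, and equality forces each `aᵢ` to be `-k` or
`(n - 1) k`. As the numbers `aᵢ + k` then lie in `{0, n k}` and have sum `n k`, all of them but one
vanish. The lower bound follows by replacing `a` with `-a`.
-/

open Finset Fintype

lemma exists_card_sub_one_constant_iff {ι α : Type*} [Fintype ι] [Nontrivial ι] {f : ι → α}
    {p : α → Prop} :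
    (∃ S : Finset ι, #S = card ι - 1 ∧ (∀ i ∈ S, p (f i)) ∧ ∀ i ∈ S, ∀ j ∈ S, f i = f j) ↔
      ∃ c, p c ∧ ∃ i, ∀ j ≠ i, f j = c := by
  classical
  constructor
  · rintro ⟨S, hS, hp, hconst⟩
    have hcard : 1 < card ι := one_lt_card
    obtain ⟨i, hi⟩ : ∃ i, Sᶜ = {i} := card_eq_one.1 (by rw [card_compl]; omega)
    obtain ⟨s, hs⟩ : S.Nonempty := card_pos.1 (by omega)
    refine ⟨f s, hp s hs, i, fun j hj => hconst j ?_ s hs⟩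
    rwa [← notMem_compl, hi, notMem_singleton]
  · rintro ⟨c, hpc, i, hi⟩
    refine ⟨{i}ᶜ, by rw [card_compl, card_singleton], ?_⟩
    simp +contextual [hi, hpc]

lemma rpow_three_halves_div_sqrt {x k : ℝ} (hx : 0 ≤ x) (hk : 0 ≤ k) :
    (x * k ^ 2) ^ ((3 : ℝ) / 2) / √x = x * k ^ 3 := by
  have hsqrt : √(x * k ^ 2) = √x * k := by rw [Real.sqrt_mul hx, Real.sqrt_sq hk]
  calc (x * k ^ 2) ^ ((3 : ℝ) / 2) / √x
      = (√x * k) ^ 3 / √x := by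
        rw [Real.rpow_div_two_eq_sqrt _ (by positivity), hsqrt, Real.rpow_ofNat]
    _ = √x ^ 3 / √x * k ^ 3 := by ring
    _ = x * k ^ 3 := by rw [show √x ^ 3 / √x = √x ^ 2 by field_simp, Real.sq_sqrt hx]

section ZeroSum

variable {ι R : Type*} [Fintype ι]

section CommRing

variable [CommRing R] {a : ι → R} {c k : R} {i : ι}

lemma sum_eq_add_card_sub_one_mul_of_forall_ne (hc : ∀ j ≠ i, a j = c) :
    ∑ j, a j = a i + (card ι - 1) * c := by
  have hdev : ∑ j, (a j - c) = a i - c :=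
    Fintype.sum_eq_single i fun j hj => sub_eq_zero.2 (hc j hj)
  rw [sum_sub_distrib, sum_const, card_univ, nsmul_eq_mul] at hdev
  linear_combination hdev

lemma eq_neg_card_sub_one_mul_of_forall_ne (hsum : ∑ j, a j = 0) (hc : ∀ j ≠ i, a j = c) :
    a i = -((card ι - 1) * c) :=
  eq_neg_of_add_eq_zero_left (sum_eq_add_card_sub_one_mul_of_forall_ne hc ▸ hsum)

lemma sum_sq_eq_of_forall_ne (hsum : ∑ j, a j = 0) (hc : ∀ j ≠ i, a j = c) :
    ∑ j, a j ^ 2 = card ι * (card ι - 1) * c ^ 2 := by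
  rw [sum_eq_add_card_sub_one_mul_of_forall_ne (c := c ^ 2) fun j hj => by rw [hc j hj],
    eq_neg_card_sub_one_mul_of_forall_ne hsum hc]
  ring

lemma sum_add_sq_mul_sub_eq (hsum : ∑ i, a i = 0)
    (hsq : ∑ i, a i ^ 2 = card ι * (card ι - 1) * k ^ 2) :
    ∑ i, (a i + k) ^ 2 * ((card ι - 1) * k - a i) =
      (card ι - 2) * (card ι * (card ι - 1) * k ^ 3) - ∑ i, a i ^ 3 := by
  have hexpand (i : ι) : (a i + k) ^ 2 * ((card ι - 1) * k - a i) =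
      (card ι - 1) * k ^ 3 + (2 * card ι - 3) * k ^ 2 * a i + (card ι - 3) * k * a i ^ 2 -
        a i ^ 3 := by
    ring
  simp only [hexpand, sum_sub_distrib, sum_add_distrib, ← mul_sum, hsum, hsq, sum_const,
    card_univ, nsmul_eq_mul]
  ring

end CommRing

section LinearOrderedRing

variable [CommRing R] [LinearOrder R] [IsStrictOrderedRing R] {a : ι → R} {k : R}

lemma card_mul_sq_le_card_sub_one_mul_sum_sq (hsum : ∑ i, a i = 0) (i : ι) :
    card ι * a i ^ 2 ≤ (card ι - 1) * ∑ j, a j ^ 2 := by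
  classical
  have hcard : (#({i}ᶜ : Finset ι) : R) = card ι - 1 := by
    rw [card_compl, card_singleton, Nat.cast_pred (card_pos_iff.2 ⟨i⟩)]
  have hcauchy := sq_sum_le_card_mul_sum_sq (s := {i}ᶜ) (f := a)
  have hsum_compl := Fintype.sum_eq_add_sum_compl i a
  have hsq_compl := Fintype.sum_eq_add_sum_compl i fun j => a j ^ 2
  rw [hcard, show ∑ j ∈ {i}ᶜ, a j = -a i by linear_combination hsum - hsum_compl] at hcauchy
  rw [hsq_compl]
  linear_combination hcauchy

lemma le_card_sub_one_mul (hk : 0 ≤ k) (hsum : ∑ i, a i = 0)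
    (hsq : ∑ i, a i ^ 2 = card ι * (card ι - 1) * k ^ 2) (i : ι) :
    a i ≤ (card ι - 1) * k := by
  have hcard : (1 : R) ≤ card ι := Nat.one_le_cast.2 (card_pos_iff.2 ⟨i⟩)
  refine le_of_sq_le_sq (le_of_mul_le_mul_left ?_ (zero_lt_one.trans_le hcard))
    (mul_nonneg (sub_nonneg.2 hcard) hk)
  calc (card ι : R) * a i ^ 2
      ≤ (card ι - 1) * ∑ j, a j ^ 2 := card_mul_sq_le_card_sub_one_mul_sum_sq hsum i
    _ = card ι * ((card ι - 1) * k) ^ 2 := by rw [hsq]; ring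

lemma sum_pow_three_eq_iff_forall_eq_or_eq (hk : 0 ≤ k) (hsum : ∑ i, a i = 0)
    (hsq : ∑ i, a i ^ 2 = card ι * (card ι - 1) * k ^ 2) :
    ∑ i, a i ^ 3 = (card ι - 2) * (card ι * (card ι - 1) * k ^ 3) ↔
      ∀ i, a i = -k ∨ a i = (card ι - 1) * k := by
  have hnonneg (i : ι) : 0 ≤ (a i + k) ^ 2 * ((card ι - 1) * k - a i) :=
    mul_nonneg (sq_nonneg _) (sub_nonneg.2 (le_card_sub_one_mul hk hsum hsq i))
  rw [eq_comm, ← sub_eq_zero, ← sum_add_sq_mul_sub_eq hsum hsq,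
    sum_eq_zero_iff_of_nonneg fun i _ => hnonneg i]
  simp only [mem_univ, true_imp_iff, mul_eq_zero, sq_eq_zero_iff, add_eq_zero_iff_eq_neg,
    sub_eq_zero, eq_comm (b := a _)]

lemma forall_eq_or_eq_iff_exists_forall_ne [Nonempty ι] (hk : 0 ≤ k) (hsum : ∑ i, a i = 0) :
    (∀ i, a i = -k ∨ a i = (card ι - 1) * k) ↔ ∃ i, ∀ j ≠ i, a j = -k := by
  constructor
  · intro hval
    by_cases hmax : ∃ i, a i = (card ι - 1) * k
    · obtain ⟨i, hi⟩ := hmax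
      have hnonneg (j : ι) : 0 ≤ a j + k := by
        rcases hval j with hj | hj
        · simp [hj]
        · rw [hj, sub_one_mul, sub_add_cancel]
          positivity
      have htotal : ∑ j, (a j + k) = card ι * k := by
        rw [sum_add_distrib, hsum, sum_const, card_univ, nsmul_eq_mul, zero_add]
      refine ⟨i, fun j hj => ?_⟩
      have hpair : (a i + k) + (a j + k) ≤ ∑ j, (a j + k) :=
        add_le_sum (fun j _ => hnonneg j) (mem_univ i) (mem_univ j) hj.symm
      linarith [hnonneg j]
    · rw [not_exists] at hmax
      exact ⟨Classical.arbitrary ι, fun j _ => (hval j).resolve_right (hmax j)⟩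
  · rintro ⟨i, hi⟩ j
    rcases eq_or_ne j i with rfl | hj
    · right
      rw [eq_neg_card_sub_one_mul_of_forall_ne hsum hi, mul_neg, neg_neg]
    · exact .inl (hi j hj)

lemma card_mul_card_sub_one_pos [Nontrivial ι] : 0 < (card ι : R) * (card ι - 1) := by
  have hcard : (1 : R) < card ι := Nat.one_lt_cast.2 one_lt_card
  exact mul_pos (zero_lt_one.trans hcard) (sub_pos.2 hcard)

lemma exists_forall_ne_eq_neg_iff [Nontrivial ι] (hk : 0 ≤ k) (hsum : ∑ i, a i = 0)
    (hsq : ∑ i, a i ^ 2 = card ι * (card ι - 1) * k ^ 2) :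
    (∃ i, ∀ j ≠ i, a j = -k) ↔ ∃ c ≤ 0, ∃ i, ∀ j ≠ i, a j = c := by
  refine ⟨fun h => ⟨-k, neg_nonpos.2 hk, h⟩, ?_⟩
  rintro ⟨c, hc, i, hi⟩
  have hpos : 0 < (card ι : R) * (card ι - 1) := card_mul_card_sub_one_pos
  have hck : (-c) ^ 2 = k ^ 2 := by
    rw [neg_sq]
    exact mul_left_cancel₀ hpos.ne' ((sum_sq_eq_of_forall_ne hsum hi).symm.trans hsq)
  have hk_eq : -c = k := (pow_left_inj₀ (neg_nonneg.2 hc) hk two_ne_zero).1 hck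
  exact ⟨i, by rwa [← hk_eq, neg_neg]⟩

end LinearOrderedRing

section Real

variable [Nontrivial ι] {a : ι → ℝ}

lemma sum_pow_three_eq_okumura_bound_iff (hsum : ∑ i, a i = 0) :
    ∑ i, a i ^ 3 = (card ι - 2) / √(card ι * (card ι - 1)) * (∑ i, a i ^ 2) ^ ((3 : ℝ) / 2) ↔
      ∃ c ≤ 0, ∃ i, ∀ j ≠ i, a j = c := by
  have hpos : 0 < (card ι : ℝ) * (card ι - 1) := card_mul_card_sub_one_pos
  obtain ⟨k, hk, hsq⟩ : ∃ k : ℝ, 0 ≤ k ∧ ∑ i, a i ^ 2 = card ι * (card ι - 1) * k ^ 2 := by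
    refine ⟨√((∑ i, a i ^ 2) / (card ι * (card ι - 1))), Real.sqrt_nonneg _, ?_⟩
    rw [Real.sq_sqrt (by positivity), mul_div_cancel₀ _ hpos.ne']
  rw [hsq, div_mul_eq_mul_div, mul_div_assoc, rpow_three_halves_div_sqrt hpos.le hk,
    sum_pow_three_eq_iff_forall_eq_or_eq hk hsum hsq,
    forall_eq_or_eq_iff_exists_forall_ne hk hsum, exists_forall_ne_eq_neg_iff hk hsum hsq]

lemma sum_pow_three_eq_neg_okumura_bound_iff (hsum : ∑ i, a i = 0) :
    ∑ i, a i ^ 3 =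
        -((card ι - 2) / √(card ι * (card ι - 1)) * (∑ i, a i ^ 2) ^ ((3 : ℝ) / 2)) ↔
      ∃ c ≥ 0, ∃ i, ∀ j ≠ i, a j = c := by
  have hneg := sum_pow_three_eq_okumura_bound_iff (a := -a) (by simp [hsum])
  simp only [Pi.neg_apply, neg_sq, Odd.neg_pow (by decide : Odd 3), sum_neg_distrib,
    neg_eq_iff_eq_neg] at hneg
  rw [hneg]
  exact (Equiv.neg ℝ).exists_congr fun c => by simp

end Real

end ZeroSum

theorem okumura_lemma_equality_general {ι : Type*} [Fintype ι] [Nontrivial ι] {a : ι → ℝ}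
    (hsum : ∑ i, a i = 0) :
    (∑ i, a i ^ 3 =
        (card ι - 2) / √(card ι * (card ι - 1)) * (∑ i, a i ^ 2) ^ ((3 : ℝ) / 2) ↔
      ∃ S : Finset ι, #S = card ι - 1 ∧ (∀ i ∈ S, a i ≤ 0) ∧ ∀ i ∈ S, ∀ j ∈ S, a i = a j) ∧
    (∑ i, a i ^ 3 =
        -((card ι - 2) / √(card ι * (card ι - 1)) * (∑ i, a i ^ 2) ^ ((3 : ℝ) / 2)) ↔
      ∃ S : Finset ι, #S = card ι - 1 ∧ (∀ i ∈ S, 0 ≤ a i) ∧ ∀ i ∈ S, ∀ j ∈ S, a i = a j) :=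
  ⟨(sum_pow_three_eq_okumura_bound_iff hsum).trans exists_card_sub_one_constant_iff.symm,
    (sum_pow_three_eq_neg_okumura_bound_iff hsum).trans exists_card_sub_one_constant_iff.symm⟩

/-- Equality characterization in Okumura's lemma: for real numbers `a₁, …, aₙ` with
`∑ aᵢ = 0`, the upper equality `∑ aᵢ³ = ((n-2)/√(n(n-1))) (∑ aᵢ²)^{3/2}` holds iff
`n-1` of the `aᵢ` are nonpositive and mutually equal, and the lower equality holds iff
`n-1` of the `aᵢ` are nonnegative and mutually equal. -/
theorem okumura_lemma_equality (n : ℕ) (hn : 2 ≤ n) (a : Fin n → ℝ)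
    (hsum : ∑ i, a i = 0) :
    ((∑ i, (a i) ^ 3 = (((n : ℝ) - 2) / Real.sqrt ((n : ℝ) * ((n : ℝ) - 1))) *
        (∑ i, (a i) ^ 2) ^ ((3 : ℝ) / 2)) ↔
      (∃ S : Finset (Fin n), S.card = n - 1 ∧ (∀ i ∈ S, a i ≤ 0) ∧
        (∀ i ∈ S, ∀ j ∈ S, a i = a j))) ∧
    ((∑ i, (a i) ^ 3 = -((((n : ℝ) - 2) / Real.sqrt ((n : ℝ) * ((n : ℝ) - 1))) *
        (∑ i, (a i) ^ 2) ^ ((3 : ℝ) / 2))) ↔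
      (∃ S : Finset (Fin n), S.card = n - 1 ∧ (∀ i ∈ S, 0 ≤ a i) ∧
        (∀ i ∈ S, ∀ j ∈ S, a i = a j))) := by
  have : Nontrivial (Fin n) := Fin.nontrivial_iff_two_le.2 hn
  simpa only [Fintype.card_fin] using okumura_lemma_equality_general hsum
end

section
/- Let n ≥ 3 be an integer, 0 < r < 1, H := (nr² − (n−1))/(nr√(1−r²)), and Φ₀ := √(n−1)/(r·√(n(1−r²))). Set α_H := (√n/(2√(n−1)))·(√(n²H² + 4(n−1)) − (n−2)|H|). If r² ≤ (n−1)/n then Φ₀ = α_H; if r² > (n−1)/n then Φ₀ = (√n/(2√(n−1)))·(√(n²H² + 4(n−1)) + (n−2)|H|) > α_H. -/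
/-!
The torus has principal curvatures `κ = -√(1-r²)/r`, of multiplicity `n - 1`, and `μ = r/√(1-r²)`,
with `κμ = -1`. For any two such curvatures with mean `H` one has
`n²H² - 4(n-1)κμ = (μ - (n-1)κ)²`, so the square root in `α_H` is linear in `κ` and `μ`, and
adding `(n-2)H` to it gives a multiple of `μ - κ`, hence of `|Φ|`. It remains to replace `H` by
`±|H|`; the sign of `H` changes at `r² = (n-1)/n`.
-/

noncomputable section

section TwoCurvatures

/-- The mean curvature of a hypersurface of dimension `n` with principal curvatures `κ`, of
multiplicity `n - 1`, and `μ`, of multiplicity one. The dimension is allowed to be real. -/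
def meanCurvature (n κ μ : ℝ) : ℝ :=
  ((n - 1) * κ + μ) / n

/-- The norm `|Φ|` of the traceless second fundamental form of a hypersurface of dimension `n`
with principal curvatures `κ`, of multiplicity `n - 1`, and `μ`, of multiplicity one. -/
def tracelessNorm (n κ μ : ℝ) : ℝ :=
  √((n - 1) * (κ - meanCurvature n κ μ) ^ 2 + (μ - meanCurvature n κ μ) ^ 2)

/-- The larger root of `x² + (n(n-2)/√(n(n-1))) h x - n(h² + c)`. The argument `h` carries a sign:
`α_H` is the value at `h = |H|`, and the value at `h = -|H|` has `+ (n-2)|H|` in its place. -/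
def alphaRoot (n c h : ℝ) : ℝ :=
  √n / (2 * √(n - 1)) * (√(n ^ 2 * h ^ 2 + 4 * (n - 1) * c) - (n - 2) * h)

variable {n c h κ μ : ℝ}

theorem tracelessNorm_eq_sqrt_div_mul (hn : 1 ≤ n) (hκμ : κ ≤ μ) :
    tracelessNorm n κ μ = √(n - 1) / √n * (μ - κ) := by
  have hn0 : 0 < n := by linarith
  have sum_sq : (n - 1) * (κ - meanCurvature n κ μ) ^ 2 + (μ - meanCurvature n κ μ) ^ 2 =
      (n - 1) / n * (μ - κ) ^ 2 := by
    unfold meanCurvature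
    field_simp
    ring
  rw [tracelessNorm, sum_sq, Real.sqrt_mul (div_nonneg (by linarith) hn0.le),
    Real.sqrt_sq (sub_nonneg.2 hκμ), Real.sqrt_div (sub_nonneg.2 hn)]

theorem sqrt_sq_meanCurvature_sub (hn : n ≠ 0) (hκμ : (n - 1) * κ ≤ μ) :
    √(n ^ 2 * meanCurvature n κ μ ^ 2 + 4 * (n - 1) * -(κ * μ)) = μ - (n - 1) * κ := by
  have perfect_square : n ^ 2 * meanCurvature n κ μ ^ 2 + 4 * (n - 1) * -(κ * μ) =
      (μ - (n - 1) * κ) ^ 2 := by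
    unfold meanCurvature
    field_simp
    ring
  rw [perfect_square, Real.sqrt_sq (sub_nonneg.2 hκμ)]

theorem tracelessNorm_eq_alphaRoot_neg_meanCurvature (hn : 1 < n) (hκμ : κ ≤ μ)
    (hκμ' : (n - 1) * κ ≤ μ) :
    tracelessNorm n κ μ = alphaRoot n (-(κ * μ)) (-meanCurvature n κ μ) := by
  have hn0 : 0 < n := by linarith
  have hn1 : 0 < n - 1 := by linarith
  have coeff : √(n - 1) / √n = √n / (2 * √(n - 1)) * (2 * (n - 1) / n) := by
    field_simp
    rw [Real.sq_sqrt hn0.le, Real.sq_sqrt hn1.le]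
    ring
  have bracket : μ - (n - 1) * κ - (n - 2) * -meanCurvature n κ μ =
      2 * (n - 1) / n * (μ - κ) := by
    unfold meanCurvature
    field_simp
    ring
  rw [alphaRoot, neg_sq, sqrt_sq_meanCurvature_sub hn0.ne' hκμ', bracket, ← mul_assoc, ← coeff,
    tracelessNorm_eq_sqrt_div_mul hn.le hκμ]

theorem alphaRoot_lt_alphaRoot_neg (hn : 2 < n) (hh : 0 < h) :
    alphaRoot n c h < alphaRoot n c (-h) := by
  have coeff_pos : 0 < √n / (2 * √(n - 1)) :=
    div_pos (Real.sqrt_pos.2 (by linarith)) (mul_pos two_pos (Real.sqrt_pos.2 (by linarith)))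
  have cross_pos : 0 < (n - 2) * h := mul_pos (sub_pos.2 hn) hh
  unfold alphaRoot
  rw [neg_sq]
  exact mul_lt_mul_of_pos_left (by linarith) coeff_pos

end TwoCurvatures

section Torus

/-- The principal curvature of `S¹(√(1-r²)) × S^{n-1}(r)` along the factor `S^{n-1}(r)`, for the
orientation that makes the mean curvature positive for `r` near `1`. -/
def sphereFactorCurvature (r : ℝ) : ℝ :=
  -(√(1 - r ^ 2) / r)

/-- The principal curvature of `S¹(√(1-r²)) × S^{n-1}(r)` along the circle factor, for the same
orientation as in `sphereFactorCurvature`. -/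
def circleFactorCurvature (r : ℝ) : ℝ :=
  r / √(1 - r ^ 2)

variable {n r : ℝ}

theorem sqrt_one_sub_sq_pos (hr0 : 0 < r) (hr1 : r < 1) : 0 < √(1 - r ^ 2) :=
  Real.sqrt_pos.2 (sub_pos.2 (pow_lt_one₀ hr0.le hr1 two_ne_zero))

theorem sphereFactorCurvature_nonpos (hr : 0 ≤ r) : sphereFactorCurvature r ≤ 0 :=
  neg_nonpos.2 (div_nonneg (Real.sqrt_nonneg _) hr)

theorem circleFactorCurvature_nonneg (hr : 0 ≤ r) : 0 ≤ circleFactorCurvature r :=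
  div_nonneg hr (Real.sqrt_nonneg _)

theorem sphereFactorCurvature_mul_circleFactorCurvature (hr0 : 0 < r) (hr1 : r < 1) :
    sphereFactorCurvature r * circleFactorCurvature r = -1 := by
  have hs := sqrt_one_sub_sq_pos hr0 hr1
  unfold sphereFactorCurvature circleFactorCurvature
  field_simp

theorem meanCurvature_torus (hr0 : 0 < r) (hr1 : r < 1) :
    meanCurvature n (sphereFactorCurvature r) (circleFactorCurvature r) =
      (n * r ^ 2 - (n - 1)) / (n * r * √(1 - r ^ 2)) := by
  have hs := sqrt_one_sub_sq_pos hr0 hr1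
  have numerator : (n - 1) * sphereFactorCurvature r + circleFactorCurvature r =
      (n * r ^ 2 - (n - 1)) / (r * √(1 - r ^ 2)) := by
    unfold sphereFactorCurvature circleFactorCurvature
    field_simp
    rw [Real.sq_sqrt (Real.sqrt_pos.1 hs).le]
    ring
  rw [meanCurvature, numerator, div_div, mul_comm _ n, mul_assoc]

theorem circleFactorCurvature_sub_sphereFactorCurvature (hr0 : 0 < r) (hr1 : r < 1) :
    circleFactorCurvature r - sphereFactorCurvature r = 1 / (r * √(1 - r ^ 2)) := by
  have hs := sqrt_one_sub_sq_pos hr0 hr1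
  unfold sphereFactorCurvature circleFactorCurvature
  field_simp
  rw [Real.sq_sqrt (Real.sqrt_pos.1 hs).le]
  ring

theorem tracelessNorm_torus (hn : 1 ≤ n) (hr0 : 0 < r) (hr1 : r < 1) :
    tracelessNorm n (sphereFactorCurvature r) (circleFactorCurvature r) =
      √(n - 1) / (r * √(n * (1 - r ^ 2))) := by
  rw [tracelessNorm_eq_sqrt_div_mul hn
      ((sphereFactorCurvature_nonpos hr0.le).trans (circleFactorCurvature_nonneg hr0.le)),
    circleFactorCurvature_sub_sphereFactorCurvature hr0 hr1,
    Real.sqrt_mul (zero_le_one.trans hn), div_mul_div_comm, mul_one, mul_left_comm]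

theorem meanCurvature_torus_nonpos_iff (hn : 0 < n) (hr0 : 0 < r) (hr1 : r < 1) :
    meanCurvature n (sphereFactorCurvature r) (circleFactorCurvature r) ≤ 0 ↔
      r ^ 2 ≤ (n - 1) / n := by
  have hs := sqrt_one_sub_sq_pos hr0 hr1
  rw [meanCurvature_torus hr0 hr1, div_le_iff₀ (by positivity), zero_mul, sub_nonpos,
    le_div_iff₀' hn]

theorem tracelessNorm_torus_eq_alphaRoot (hn : 1 < n) (hr0 : 0 < r) (hr1 : r < 1) :
    tracelessNorm n (sphereFactorCurvature r) (circleFactorCurvature r) =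
      alphaRoot n 1
        (-meanCurvature n (sphereFactorCurvature r) (circleFactorCurvature r)) := by
  have hκ := sphereFactorCurvature_nonpos hr0.le
  have hμ := circleFactorCurvature_nonneg hr0.le
  rw [tracelessNorm_eq_alphaRoot_neg_meanCurvature hn (hκ.trans hμ)
      ((mul_nonpos_of_nonneg_of_nonpos (sub_nonneg.2 hn.le) hκ).trans hμ),
    sphereFactorCurvature_mul_circleFactorCurvature hr0 hr1, neg_neg]

end Torus

end

theorem sphere_torus_phi_vs_alpha_general (n : ℝ) (hn : 1 < n) (r : ℝ) (hr0 : 0 < r)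
    (hr1 : r < 1) (H Φ₀ αH : ℝ)
    (hH : H = (n * r ^ 2 - (n - 1)) / (n * r * √(1 - r ^ 2)))
    (hΦ₀ : Φ₀ = √(n - 1) / (r * √(n * (1 - r ^ 2))))
    (hα : αH = √n / (2 * √(n - 1)) * (√(n ^ 2 * H ^ 2 + 4 * (n - 1)) - (n - 2) * |H|)) :
    (r ^ 2 ≤ (n - 1) / n → Φ₀ = αH) ∧
    (r ^ 2 > (n - 1) / n →
      Φ₀ = √n / (2 * √(n - 1)) * (√(n ^ 2 * H ^ 2 + 4 * (n - 1)) + (n - 2) * |H|) ∧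
        (2 < n → Φ₀ > αH)) := by
  have sign_H := meanCurvature_torus_nonpos_iff (zero_lt_one.trans hn) hr0 hr1
  have norm_eq := tracelessNorm_torus_eq_alphaRoot hn hr0 hr1
  rw [tracelessNorm_torus hn.le hr0 hr1, ← hΦ₀] at norm_eq
  rw [meanCurvature_torus hr0 hr1, ← hH] at sign_H norm_eq
  have alpha_eq : αH = alphaRoot n 1 |H| := by rw [hα, alphaRoot, sq_abs, mul_one]
  constructor
  · intro hr
    rw [norm_eq, alpha_eq, abs_of_nonpos (sign_H.2 hr)]
  · intro hr
    have H_pos : 0 < H := lt_of_not_ge (mt sign_H.1 hr.not_ge)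
    rw [norm_eq, alpha_eq, abs_of_pos H_pos]
    refine ⟨?_, fun hn2 => alphaRoot_lt_alphaRoot_neg hn2 H_pos⟩
    rw [alphaRoot, neg_sq, mul_one, mul_neg, sub_neg_eq_add]

/-- For the torus `S¹(√(1-r²)) × S^{n-1}(r) ⊂ S^{n+1}` with mean curvature
`H = (nr² - (n-1))/(nr√(1-r²))` and `|Φ| = Φ₀ = √(n-1)/(r√(n(1-r²)))`, setting
`α_H = (√n/(2√(n-1)))(√(n²H² + 4(n-1)) - (n-2)|H|)`: if `r² ≤ (n-1)/n` then
`Φ₀ = α_H`, and if `r² > (n-1)/n` then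
`Φ₀ = (√n/(2√(n-1)))(√(n²H² + 4(n-1)) + (n-2)|H|) > α_H`. -/
theorem sphere_torus_phi_vs_alpha (n : ℕ) (hn : 3 ≤ n) (r : ℝ) (hr0 : 0 < r)
    (hr1 : r < 1) (H Φ₀ αH : ℝ)
    (hH : H = ((n : ℝ) * r ^ 2 - ((n : ℝ) - 1)) / ((n : ℝ) * r * Real.sqrt (1 - r ^ 2)))
    (hΦ₀ : Φ₀ = Real.sqrt ((n : ℝ) - 1) / (r * Real.sqrt ((n : ℝ) * (1 - r ^ 2))))
    (hα : αH = (Real.sqrt (n : ℝ) / (2 * Real.sqrt ((n : ℝ) - 1))) *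
      (Real.sqrt ((n : ℝ) ^ 2 * H ^ 2 + 4 * ((n : ℝ) - 1)) - ((n : ℝ) - 2) * |H|)) :
    (r ^ 2 ≤ ((n : ℝ) - 1) / (n : ℝ) → Φ₀ = αH) ∧
    (r ^ 2 > ((n : ℝ) - 1) / (n : ℝ) →
      Φ₀ = (Real.sqrt (n : ℝ) / (2 * Real.sqrt ((n : ℝ) - 1))) *
          (Real.sqrt ((n : ℝ) ^ 2 * H ^ 2 + 4 * ((n : ℝ) - 1)) + ((n : ℝ) - 2) * |H|) ∧
        Φ₀ > αH) := by
  have hn2 : (2 : ℝ) < n := by exact_mod_cast hn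
  have h := sphere_torus_phi_vs_alpha_general n (by linarith) r hr0 hr1 H Φ₀ αH hH hΦ₀ hα
  exact ⟨h.1, fun hr => (h.2 hr).imp_right fun strict => strict hn2⟩
end

section
/- Let H ≠ 0 be a real number and 0 < B < 1, and define K_B(s) := 4H²·B·(B + sin(2Hs))·(1 + B·sin(2Hs))/(1 + B² + 2B·sin(2Hs))² for s ∈ ℝ. Then inf_{s∈ℝ} K_B(s) = −4H²B/(1−B)², and this infimum is attained (at every s with sin(2Hs) = −1). -/
/-!
Put `D = 1 + B² + 2Bx` with `x = sin (2Hs)`. Since `2B(B + x) = D - (1 - B²)` and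
`2(1 + Bx) = D + (1 - B²)`, the curvature is `H²(1 - q²)` with `q = (1 - B²)/D`, the product of the
principal curvatures `H(1 - q)` and `H(1 + q)`. As `D` is `4H²` times the squared distance to the
axis, the curvature increases with that distance, so it is smallest at the necks `x = -1`, where
`D = (1 - B)²`.
-/

section DelaunayCurvature

variable {𝕜 : Type*} [Field 𝕜]

/-- The Gaussian curvature of the Delaunay surface of mean curvature `H` and parameter `B`, written
as a rational function of `x = sin (2Hs)`, where `s` is the arc length of the profile curve. The
surface is a cylinder for `B = 0`, an unduloid for `0 < B < 1` and a nodoid for `1 < B`. -/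
def delaunayCurvature (H B x : 𝕜) : 𝕜 :=
  4 * H ^ 2 * B * (B + x) * (1 + B * x) / (1 + B ^ 2 + 2 * B * x) ^ 2

lemma delaunayCurvature_eq (H : 𝕜) {B x : 𝕜} (hD : 1 + B ^ 2 + 2 * B * x ≠ 0) :
    delaunayCurvature H B x =
      H ^ 2 * (1 - ((1 - B ^ 2) / (1 + B ^ 2 + 2 * B * x)) ^ 2) := by
  have numerator_eq : 4 * H ^ 2 * B * (B + x) * (1 + B * x) =
      H ^ 2 * ((1 + B ^ 2 + 2 * B * x) ^ 2 - (1 - B ^ 2) ^ 2) := by ring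
  rw [delaunayCurvature, numerator_eq, mul_div_assoc, sub_div, div_self (pow_ne_zero 2 hD), div_pow]

lemma delaunayCurvature_neg_one (H : 𝕜) {B : 𝕜} (hB : B ≠ 1) :
    delaunayCurvature H B (-1) = -(4 * H ^ 2 * B) / (1 - B) ^ 2 := by
  have hB' : (1 - B) ^ 2 ≠ 0 := pow_ne_zero 2 (sub_ne_zero.mpr hB.symm)
  calc delaunayCurvature H B (-1)
      = -(4 * H ^ 2 * B) * (1 - B) ^ 2 / ((1 - B) ^ 2 * (1 - B) ^ 2) := by
        unfold delaunayCurvature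
        congr 1 <;> ring
    _ = -(4 * H ^ 2 * B) / (1 - B) ^ 2 := mul_div_mul_right _ _ hB'

lemma monotoneOn_delaunayCurvature [LinearOrder 𝕜] [IsStrictOrderedRing 𝕜] (H : 𝕜) {B : 𝕜}
    (hB : 0 ≤ B) :
    MonotoneOn (delaunayCurvature H B) {x | 0 < 1 + B ^ 2 + 2 * B * x} := by
  intro x (hx : 0 < 1 + B ^ 2 + 2 * B * x) y (hy : 0 < 1 + B ^ 2 + 2 * B * y) hxy
  rw [delaunayCurvature_eq H hx.ne', delaunayCurvature_eq H hy.ne', div_pow, div_pow]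
  gcongr

lemma delaunayCurvature_neg_one_le [LinearOrder 𝕜] [IsStrictOrderedRing 𝕜] (H : 𝕜) {B x : 𝕜}
    (hB0 : 0 ≤ B) (hB1 : B ≠ 1) (hx : -1 ≤ x) :
    delaunayCurvature H B (-1) ≤ delaunayCurvature H B x := by
  have neck_pos : 0 < 1 + B ^ 2 + 2 * B * (-1) :=
    calc 0 < (1 - B) ^ 2 := sq_pos_of_ne_zero (sub_ne_zero.mpr hB1.symm)
      _ = 1 + B ^ 2 + 2 * B * (-1) := by ring
  have pos : 0 < 1 + B ^ 2 + 2 * B * x := neck_pos.trans_le (by gcongr)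
  exact monotoneOn_delaunayCurvature H hB0 neck_pos pos hx

end DelaunayCurvature

lemma exists_sin_mul_eq {a y : ℝ} (ha : a ≠ 0) (hy : y ∈ Set.Icc (-1) 1) :
    ∃ s : ℝ, Real.sin (a * s) = y :=
  ⟨Real.arcsin y / a, by rw [mul_div_cancel₀ _ ha, Real.sin_arcsin hy.1 hy.2]⟩

theorem unduloid_inf_curvature_general (H B : ℝ) (hH : H ≠ 0) (hB0 : 0 ≤ B) (hB1 : B ≠ 1)
    (KB : ℝ → ℝ) (hK : ∀ s, KB s = delaunayCurvature H B (Real.sin (2 * H * s))) :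
    IsGLB (Set.range KB) (-(4 * H ^ 2 * B) / (1 - B) ^ 2) ∧
    (∀ s : ℝ, Real.sin (2 * H * s) = -1 → KB s = -(4 * H ^ 2 * B) / (1 - B) ^ 2) ∧
    (∃ s : ℝ, Real.sin (2 * H * s) = -1) := by
  have exists_neck : ∃ s : ℝ, Real.sin (2 * H * s) = -1 :=
    exists_sin_mul_eq (mul_ne_zero two_ne_zero hH) (by norm_num)
  have neck_value (s : ℝ) (hs : Real.sin (2 * H * s) = -1) :
      KB s = -(4 * H ^ 2 * B) / (1 - B) ^ 2 := by
    rw [hK, hs, delaunayCurvature_neg_one H hB1]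
  have isLeast : IsLeast (Set.range KB) (-(4 * H ^ 2 * B) / (1 - B) ^ 2) := by
    refine ⟨exists_neck.imp neck_value, Set.forall_mem_range.mpr fun s ↦ ?_⟩
    rw [hK, ← delaunayCurvature_neg_one H hB1]
    exact delaunayCurvature_neg_one_le H hB0 hB1 (Real.neg_one_le_sin _)
  exact ⟨isLeast.isGLB, neck_value, exists_neck⟩

/-- The Gaussian curvature
`K_B(s) = 4H²B(B + sin(2Hs))(1 + B sin(2Hs))/(1 + B² + 2B sin(2Hs))²` of the Delaunay
unduloid has infimum `-4H²B/(1-B)²` over `s ∈ ℝ`, attained at every `s` with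
`sin(2Hs) = -1` (and such `s` exist). -/
theorem unduloid_inf_curvature (H B : ℝ) (hH : H ≠ 0) (hB0 : 0 < B) (hB1 : B < 1)
    (KB : ℝ → ℝ)
    (hK : ∀ s, KB s =
      4 * H ^ 2 * B * (B + Real.sin (2 * H * s)) * (1 + B * Real.sin (2 * H * s)) /
        (1 + B ^ 2 + 2 * B * Real.sin (2 * H * s)) ^ 2) :
    IsGLB (Set.range KB) (-(4 * H ^ 2 * B) / (1 - B) ^ 2) ∧
    (∀ s : ℝ, Real.sin (2 * H * s) = -1 → KB s = -(4 * H ^ 2 * B) / (1 - B) ^ 2) ∧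
    (∃ s : ℝ, Real.sin (2 * H * s) = -1) := by
  exact unduloid_inf_curvature_general H B hH hB0.le hB1.ne KB hK
end
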